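/- arXiv:1806.05438 — 5 statements merged into one kernel-verified Lean document; each statement's English description precedes it below -/
import Mathlib

section
/- (Convergence of expected SGD iterates, Proposition 3.) Let F : H → ℝ be Fréchet differentiable with gradient ∇F, λ-strongly convex (for all g,h ∈ H, F(h) ≥ F(g) + ⟨∇F(g), h−g⟩ + (λ/2)‖h−g‖²) and (L+λ)-smooth (for all g,h, F(g+h) ≤ F(g) + ⟨∇F(g), h⟩ + ((L+λ)/2)‖h‖²), with minimizer g_λ ∈ H. Let g₁ ∈ H be deterministic, let (F_t) be a filtration, and let (G_t)_{t≥1} be H-valued random vectors, G_t measurable with respect to F_{t+1}, with E[G_t | F_t] = ∇F(g_t) and E[‖G_t‖² | F_t] ≤ ‖∇F(g_t)‖² + σ² almost surely, where (g_t) is (F_t)-adapted and defined by g_{t+1} = g_t − η_t G_t with η_t = 2/(λ(γ+t)) and γ > 0 chosen so that η₁ ≤ 1/(L+λ). Set ν = max{ (2/λ²)(L+λ)σ², (1+γ)(F(g₁) − F(g_λ)) }. Then for every T ≥ 1, E[F(g_T)] − F(g_λ) ≤ ν/(γ+T) and ‖E[g_T] − g_λ‖² ≤ 2ν/(λ(γ+T)).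 -/
open MeasureTheory Filter Set
open scoped RealInnerProductSpace

/-!
One step of SGD is controlled by the quadratic upper bound at `g t`: taking expectations, the linear
term becomes `-η t * E‖∇F(g t)‖²`, the quadratic one at most `(M / 2) * η t ^ 2` times
`E‖∇F(g t)‖² + σ²`, where `M = L + λ`. As `η t * M ≤ 1`, half of the decrease survives, and the
Polyak–Łojasiewicz inequality `2λ (F - F(g_λ)) ≤ ‖∇F‖²` turns it into a contraction by
`1 - η t * λ = 1 - 2 / (γ + t)`, whose solutions decay like `ν / (γ + t)`. The bound on the iterates
follows from quadratic growth around `g_λ` and Jensen's inequality for the squared norm.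
-/

section Objective

variable {H : Type*} [NormedAddCommGroup H] [InnerProductSpace ℝ H]
  {F : H → ℝ} {v x : H} {m M : ℝ}

/-- `v` is an `m`-strong subgradient of `F` at `x`: the first-order form of `m`-strong convexity,
localized at the base point `x`. -/
def IsStrongSubgradientAt (m : ℝ) (F : H → ℝ) (v x : H) : Prop :=
  ∀ y, F x + ⟪v, y - x⟫ + m / 2 * ‖y - x‖ ^ 2 ≤ F y

/-- The quadratic upper bound expressing `M`-smoothness of `F` at the base point `x`, with `v` in
the role of the gradient. -/
def HasQuadraticUpperBoundAt (M : ℝ) (F : H → ℝ) (v x : H) : Prop :=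
  ∀ h, F (x + h) ≤ F x + ⟪v, h⟫ + M / 2 * ‖h‖ ^ 2

theorem IsStrongSubgradientAt.two_mul_sub_le_norm_sq (h : IsStrongSubgradientAt m F v x)
    (hm : 0 ≤ m) (y : H) : 2 * m * (F x - F y) ≤ ‖v‖ ^ 2 := by
  have hsq : 0 ≤ ‖v‖ ^ 2 + 2 * (m * ⟪v, y - x⟫) + m ^ 2 * ‖y - x‖ ^ 2 := by
    calc 0 ≤ ‖v + m • (y - x)‖ ^ 2 := sq_nonneg _
      _ = _ := by
        rw [norm_add_sq_real, norm_smul, mul_pow, inner_smul_right, Real.norm_eq_abs, sq_abs]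
  linarith [mul_le_mul_of_nonneg_left (h y) hm]

theorem IsStrongSubgradientAt.mul_norm_sub_sq_le (h : IsStrongSubgradientAt m F 0 x) (y : H) :
    m / 2 * ‖y - x‖ ^ 2 ≤ F y - F x := by
  have hy := h y
  rw [inner_zero_left] at hy
  linarith

theorem HasQuadraticUpperBoundAt.sub_smul_le (h : HasQuadraticUpperBoundAt M F v x)
    (η : ℝ) (z : H) : F (x - η • z) ≤ F x - η * ⟪v, z⟫ + M / 2 * η ^ 2 * ‖z‖ ^ 2 := by
  have hstep := h (-(η • z))
  rw [← sub_eq_add_neg, inner_neg_right, inner_smul_right, norm_neg, norm_smul, mul_pow,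
    Real.norm_eq_abs, sq_abs] at hstep
  linarith

theorem hasGradientAt_eq_zero_of_isLocalMin [CompleteSpace H] (hv : HasGradientAt F v x)
    (hx : IsLocalMin F x) : v = 0 := by
  simpa using hx.hasFDerivAt_eq_zero hv.hasFDerivAt

end Objective

section QuadraticGrowth

variable {Ω : Type*} {m0 : MeasurableSpace Ω} {μ : Measure Ω} [IsProbabilityMeasure μ]

theorem norm_integral_pow_le_integral_norm_pow {E : Type*} [NormedAddCommGroup E]
    [NormedSpace ℝ E] [CompleteSpace E] {X : Ω → E} (n : ℕ) (hX : Integrable X μ)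
    (hXn : Integrable (fun ω => ‖X ω‖ ^ n) μ) : ‖∫ ω, X ω ∂μ‖ ^ n ≤ ∫ ω, ‖X ω‖ ^ n ∂μ :=
  ((convexOn_norm convex_univ).pow (fun _ _ => norm_nonneg _) n).map_integral_le
    (continuous_norm.pow n).continuousOn isClosed_univ (Eventually.of_forall fun _ => mem_univ _)
    hX hXn

variable {H : Type*} [NormedAddCommGroup H] [InnerProductSpace ℝ H]
  {F : H → ℝ} {X : Ω → H} {x : H} {m : ℝ}

theorem IsStrongSubgradientAt.mul_norm_integral_sub_sq_le [CompleteSpace H]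
    (h : IsStrongSubgradientAt m F 0 x) (hm : 0 < m) (hX : Integrable X μ)
    (hFX : Integrable (fun ω => F (X ω)) μ) :
    m / 2 * ‖(∫ ω, X ω ∂μ) - x‖ ^ 2 ≤ (∫ ω, F (X ω) ∂μ) - F x := by
  have hXx : Integrable (fun ω => X ω - x) μ := hX.sub (integrable_const x)
  have hFXx : Integrable (fun ω => F (X ω) - F x) μ := hFX.sub (integrable_const _)
  have hsq : Integrable (fun ω => m / 2 * ‖X ω - x‖ ^ 2) μ :=
    hFXx.mono' ((hXx.aestronglyMeasurable.norm.pow 2).const_mul _) <|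
      Eventually.of_forall fun ω => by
        rw [Real.norm_of_nonneg (by positivity)]
        exact h.mul_norm_sub_sq_le (X ω)
  calc m / 2 * ‖(∫ ω, X ω ∂μ) - x‖ ^ 2
      = m / 2 * ‖∫ ω, X ω - x ∂μ‖ ^ 2 := by simp [integral_sub hX (integrable_const x)]
    _ ≤ m / 2 * ∫ ω, ‖X ω - x‖ ^ 2 ∂μ := by
        gcongr
        exact norm_integral_pow_le_integral_norm_pow 2 hXx
          ((integrable_const_mul_iff (half_pos hm).ne'.isUnit _).1 hsq)
    _ = ∫ ω, m / 2 * ‖X ω - x‖ ^ 2 ∂μ := (integral_const_mul _ _).symm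
    _ ≤ ∫ ω, F (X ω) - F x ∂μ := integral_mono hsq hFXx fun ω => h.mul_norm_sub_sq_le (X ω)
    _ = (∫ ω, F (X ω) ∂μ) - F x := by simp [integral_sub hFX (integrable_const _)]

end QuadraticGrowth

section StochasticGradient

variable {H : Type*} [NormedAddCommGroup H] [InnerProductSpace ℝ H]
  {Ω : Type*} {m m0 : MeasurableSpace Ω} {μ : Measure Ω}

theorem integrable_inner_of_memLp_two {Y Z : Ω → H} (hY : MemLp Y 2 μ) (hZ : MemLp Z 2 μ) :
    Integrable (fun ω => ⟪Y ω, Z ω⟫) μ :=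
  memLp_one_iff_integrable.1 ((innerSL ℝ).memLp_of_bilin 1 hY hZ)

variable [CompleteSpace H]

theorem integral_inner_condExp_right [IsFiniteMeasure μ] {Y Z : Ω → H} (hm : m ≤ m0)
    (hY : AEStronglyMeasurable[m] Y μ) (hYZ : Integrable (fun ω => ⟪Y ω, Z ω⟫) μ)
    (hZ : Integrable Z μ) : ∫ ω, ⟪Y ω, (μ[Z | m]) ω⟫ ∂μ = ∫ ω, ⟪Y ω, Z ω⟫ ∂μ :=
  calc ∫ ω, ⟪Y ω, (μ[Z | m]) ω⟫ ∂μ = ∫ ω, (μ[fun ω => ⟪Y ω, Z ω⟫ | m]) ω ∂μ :=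
        integral_congr_ae
          (condExp_bilin_of_aestronglyMeasurable_left (innerSL ℝ) hY hYZ hZ).symm
    _ = ∫ ω, ⟪Y ω, Z ω⟫ ∂μ := integral_condExp hm

/-- `Z` is a stochastic gradient with mean `D` and noise level `σ`, given the information `m`:
conditionally on `m`, it is an unbiased estimator of `D` whose second moment exceeds `‖D‖²` by at
most `σ²`. -/
structure IsStochasticGradient (μ : Measure Ω) (m : MeasurableSpace Ω) (σ : ℝ) (D Z : Ω → H) :
    Prop where
  memLp : MemLp Z 2 μ
  condExp_eq : μ[Z | m] =ᵐ[μ] D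
  condExp_norm_sq_le : μ[fun ω => ‖Z ω‖ ^ 2 | m] ≤ᵐ[μ] fun ω => ‖D ω‖ ^ 2 + σ ^ 2

namespace IsStochasticGradient

variable {σ η M : ℝ} {D Z X : Ω → H} {F : H → ℝ}

theorem memLp_mean (h : IsStochasticGradient μ m σ D Z) : MemLp D 2 μ :=
  (h.memLp.condExp one_le_two).ae_eq h.condExp_eq

theorem integrable_norm_sq_mean (h : IsStochasticGradient μ m σ D Z) :
    Integrable (fun ω => ‖D ω‖ ^ 2) μ :=
  h.memLp_mean.integrable_norm_pow two_ne_zero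

theorem integral_inner_eq [IsFiniteMeasure μ] (h : IsStochasticGradient μ m σ D Z)
    (hm : m ≤ m0) : ∫ ω, ⟪D ω, Z ω⟫ ∂μ = ∫ ω, ‖D ω‖ ^ 2 ∂μ := by
  have hD : AEStronglyMeasurable[m] D μ :=
    stronglyMeasurable_condExp.aestronglyMeasurable.congr h.condExp_eq
  rw [← integral_inner_condExp_right hm hD (integrable_inner_of_memLp_two h.memLp_mean h.memLp)
    (h.memLp.integrable one_le_two)]
  refine integral_congr_ae ?_
  filter_upwards [h.condExp_eq] with ω hω
  rw [hω, real_inner_self_eq_norm_sq]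

variable [IsProbabilityMeasure μ]

theorem integral_norm_sq_le (h : IsStochasticGradient μ m σ D Z) (hm : m ≤ m0) :
    ∫ ω, ‖Z ω‖ ^ 2 ∂μ ≤ (∫ ω, ‖D ω‖ ^ 2 ∂μ) + σ ^ 2 :=
  calc ∫ ω, ‖Z ω‖ ^ 2 ∂μ = ∫ ω, (μ[fun ω => ‖Z ω‖ ^ 2 | m]) ω ∂μ := (integral_condExp hm).symm
    _ ≤ ∫ ω, ‖D ω‖ ^ 2 + σ ^ 2 ∂μ :=
        integral_mono_ae integrable_condExp (h.integrable_norm_sq_mean.add (integrable_const _))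
          h.condExp_norm_sq_le
    _ = (∫ ω, ‖D ω‖ ^ 2 ∂μ) + σ ^ 2 := by
        simp [integral_add h.integrable_norm_sq_mean (integrable_const _)]

theorem integral_sub_smul_le (h : IsStochasticGradient μ m σ D Z) (hm : m ≤ m0)
    (hM : 0 ≤ M) (hη : 0 ≤ η) (hηM : η * M ≤ 1)
    (hsmooth : ∀ ω, HasQuadraticUpperBoundAt M F (D ω) (X ω))
    (hFX : Integrable (fun ω => F (X ω)) μ)
    (hFX' : Integrable (fun ω => F (X ω - η • Z ω)) μ) :
    ∫ ω, F (X ω - η • Z ω) ∂μ ≤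
      (∫ ω, F (X ω) ∂μ) - η / 2 * (∫ ω, ‖D ω‖ ^ 2 ∂μ) + M / 2 * η ^ 2 * σ ^ 2 := by
  have hlin : Integrable (fun ω => η * ⟪D ω, Z ω⟫) μ :=
    (integrable_inner_of_memLp_two h.memLp_mean h.memLp).const_mul η
  have hdecrease : Integrable (fun ω => F (X ω) - η * ⟪D ω, Z ω⟫) μ := hFX.sub hlin
  have hquad : Integrable (fun ω => M / 2 * η ^ 2 * ‖Z ω‖ ^ 2) μ :=
    (h.memLp.integrable_norm_pow two_ne_zero).const_mul _
  have hD : 0 ≤ η / 2 * ∫ ω, ‖D ω‖ ^ 2 ∂μ :=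
    mul_nonneg (by positivity) (integral_nonneg fun ω => by positivity)
  calc ∫ ω, F (X ω - η • Z ω) ∂μ
      ≤ ∫ ω, F (X ω) - η * ⟪D ω, Z ω⟫ + M / 2 * η ^ 2 * ‖Z ω‖ ^ 2 ∂μ :=
        integral_mono hFX' (hdecrease.add hquad) fun ω => (hsmooth ω).sub_smul_le η (Z ω)
    _ = (∫ ω, F (X ω) ∂μ) - η * (∫ ω, ‖D ω‖ ^ 2 ∂μ)
          + M / 2 * η ^ 2 * ∫ ω, ‖Z ω‖ ^ 2 ∂μ := by
        rw [integral_add hdecrease hquad, integral_sub hFX hlin, integral_const_mul,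
          integral_const_mul, h.integral_inner_eq hm]
    _ ≤ (∫ ω, F (X ω) ∂μ) - η * (∫ ω, ‖D ω‖ ^ 2 ∂μ)
          + M / 2 * η ^ 2 * ((∫ ω, ‖D ω‖ ^ 2 ∂μ) + σ ^ 2) := by
        gcongr
        exact h.integral_norm_sq_le hm
    _ ≤ _ := by linarith [mul_le_mul_of_nonneg_right hηM hD]

theorem integral_sub_smul_sub_le {lam : ℝ} (h : IsStochasticGradient μ m σ D Z) (hm : m ≤ m0)
    (hlam : 0 ≤ lam) (hM : 0 ≤ M) (hη : 0 ≤ η) (hηM : η * M ≤ 1)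
    (hsc : ∀ ω, IsStrongSubgradientAt lam F (D ω) (X ω))
    (hsmooth : ∀ ω, HasQuadraticUpperBoundAt M F (D ω) (X ω))
    (hFX : Integrable (fun ω => F (X ω)) μ)
    (hFX' : Integrable (fun ω => F (X ω - η • Z ω)) μ) (y : H) :
    (∫ ω, F (X ω - η • Z ω) ∂μ) - F y ≤
      (1 - η * lam) * ((∫ ω, F (X ω) ∂μ) - F y) + M / 2 * η ^ 2 * σ ^ 2 := by
  have hPL : 2 * lam * ((∫ ω, F (X ω) ∂μ) - F y) ≤ ∫ ω, ‖D ω‖ ^ 2 ∂μ :=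
    calc 2 * lam * ((∫ ω, F (X ω) ∂μ) - F y) = ∫ ω, 2 * lam * (F (X ω) - F y) ∂μ := by
          rw [integral_const_mul, integral_sub hFX (integrable_const _)]
          simp
      _ ≤ ∫ ω, ‖D ω‖ ^ 2 ∂μ :=
          integral_mono ((hFX.sub (integrable_const _)).const_mul _) h.integrable_norm_sq_mean
            fun ω => (hsc ω).two_mul_sub_le_norm_sq hlam y
  linarith [h.integral_sub_smul_le hm hM hη hηM hsmooth hFX hFX',
    mul_le_mul_of_nonneg_left hPL (by positivity : 0 ≤ η / 2)]

theorem integral_sub_smul_sub_le_of_eq_two_div {lam s ν : ℝ} (h : IsStochasticGradient μ m σ D Z)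
    (hm : m ≤ m0) (hlam : 0 < lam) (hs : 0 < s) (hη : η = 2 / (lam * s)) (hM : 0 ≤ M)
    (hηM : η * M ≤ 1) (hν : 2 / lam ^ 2 * M * σ ^ 2 ≤ ν)
    (hsc : ∀ ω, IsStrongSubgradientAt lam F (D ω) (X ω))
    (hsmooth : ∀ ω, HasQuadraticUpperBoundAt M F (D ω) (X ω))
    (hFX : Integrable (fun ω => F (X ω)) μ)
    (hFX' : Integrable (fun ω => F (X ω - η • Z ω)) μ) (y : H) :
    (∫ ω, F (X ω - η • Z ω) ∂μ) - F y ≤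
      (1 - 2 / s) * ((∫ ω, F (X ω) ∂μ) - F y) + ν / s ^ 2 := by
  have hη0 : 0 ≤ η := hη ▸ by positivity
  have hrate : η * lam = 2 / s := by rw [hη]; field_simp
  have hnoise : M / 2 * η ^ 2 * σ ^ 2 ≤ ν / s ^ 2 :=
    calc M / 2 * η ^ 2 * σ ^ 2 = 2 / lam ^ 2 * M * σ ^ 2 / s ^ 2 := by rw [hη]; field_simp
      _ ≤ ν / s ^ 2 := by gcongr
  rw [← hrate]
  linarith [h.integral_sub_smul_sub_le hm hlam.le hM hη0 hηM hsc hsmooth hFX hFX' y]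

end IsStochasticGradient

end StochasticGradient

section Recursion

variable {γ ν : ℝ}

theorem one_sub_two_div_mul_add_le {s : ℝ} (hs : 0 < s) (hν : 0 ≤ ν) :
    (1 - 2 / s) * (ν / s) + ν / s ^ 2 ≤ ν / (s + 1) := by
  have hsum : (1 - 2 / s) * (ν / s) + ν / s ^ 2 = ν * (s - 1) / s ^ 2 := by field_simp; ring
  rw [hsum, div_le_div_iff₀ (by positivity) (by positivity)]
  linarith

theorem le_div_add_of_le_one_sub_two_div_mul_add {a : ℕ → ℝ} (hγ : 1 ≤ γ) (hν : 0 ≤ ν)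
    (h1 : (1 + γ) * a 1 ≤ ν)
    (hstep : ∀ t : ℕ, 1 ≤ t → a (t + 1) ≤ (1 - 2 / (γ + t)) * a t + ν / (γ + t) ^ 2)
    {t : ℕ} (ht : 1 ≤ t) : a t ≤ ν / (γ + t) := by
  induction t, ht using Nat.le_induction with
  | base =>
    rw [le_div_iff₀ (by positivity)]
    push_cast
    linarith
  | succ t ht ih =>
    have ht' : (1 : ℝ) ≤ t := by exact_mod_cast ht
    have hcoef : 0 ≤ 1 - 2 / (γ + t) := by
      rw [sub_nonneg, div_le_one (by positivity)]
      linarith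
    calc a (t + 1) ≤ (1 - 2 / (γ + t)) * a t + ν / (γ + t) ^ 2 := hstep t ht
      _ ≤ (1 - 2 / (γ + t)) * (ν / (γ + t)) + ν / (γ + t) ^ 2 := by gcongr
      _ ≤ ν / (γ + t + 1) := one_sub_two_div_mul_add_le (by positivity) hν
      _ = ν / (γ + (t + 1 : ℕ)) := by push_cast; ring

end Recursion

section StepSize

variable {lam M γ : ℝ}

theorem one_le_of_two_div_le_one_div (hlam : 0 < lam) (hlamM : lam ≤ M) (hγ : 0 < γ)
    (h : 2 / (lam * (γ + 1)) ≤ 1 / M) : 1 ≤ γ := by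
  rw [div_le_div_iff₀ (by positivity) (hlam.trans_le hlamM)] at h
  have hγ1 : lam * 2 ≤ lam * (γ + 1) := by linarith
  linarith [le_of_mul_le_mul_left hγ1 hlam]

theorem two_div_mul_le_one_of_two_div_le_one_div (hlam : 0 < lam) (hM : 0 < M) (hγ : 0 < γ)
    (h : 2 / (lam * (γ + 1)) ≤ 1 / M) {t : ℕ} (ht : 1 ≤ t) :
    2 / (lam * (γ + t)) * M ≤ 1 := by
  have ht' : (1 : ℝ) ≤ t := by exact_mod_cast ht
  rw [← le_div_iff₀ hM]
  calc 2 / (lam * (γ + t)) ≤ 2 / (lam * (γ + 1)) := by gcongr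
    _ ≤ 1 / M := h

end StepSize

theorem expected_sgd_convergence_general
    {H : Type*} [NormedAddCommGroup H] [InnerProductSpace ℝ H] [CompleteSpace H]
    {Ω : Type*} {m0 : MeasurableSpace Ω} (μ : Measure Ω) [IsProbabilityMeasure μ]
    (ℱ : ℕ → MeasurableSpace Ω) (hℱ : ∀ t, ℱ t ≤ m0)
    (lam L σ γ : ℝ) (hlam : 0 < lam) (hL : 0 ≤ L) (hγ : 0 < γ)
    (F : H → ℝ) (F' : H → H)
    (hgrad : ∀ g : H, HasGradientAt F (F' g) g)
    (hsc : ∀ g : H, IsStrongSubgradientAt lam F (F' g) g)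
    (hsmooth : ∀ g : H, HasQuadraticUpperBoundAt (L + lam) F (F' g) g)
    (glam : H) (hglam : ∀ g : H, F glam ≤ F g)
    (η : ℕ → ℝ) (hη : ∀ t : ℕ, 1 ≤ t → η t = 2 / (lam * (γ + t)))
    (hη1 : 2 / (lam * (γ + 1)) ≤ 1 / (L + lam))
    (g : ℕ → Ω → H) (G : ℕ → Ω → H)
    (hG : ∀ t : ℕ, 1 ≤ t → IsStochasticGradient μ (ℱ t) σ (fun ω => F' (g t ω)) (G t))
    (hupd : ∀ t : ℕ, 1 ≤ t → ∀ ω : Ω, g (t + 1) ω = g t ω - η t • G t ω)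
    (hFint : ∀ t : ℕ, Integrable (fun ω => F (g t ω)) μ)
    (hgint : ∀ t : ℕ, Integrable (g t) μ)
    (ν : ℝ)
    (hν : ν = max (2 / lam ^ 2 * (L + lam) * σ ^ 2)
      ((1 + γ) * ((∫ ω, F (g 1 ω) ∂μ) - F glam)))
    (T : ℕ) (hT : 1 ≤ T) :
    (∫ ω, F (g T ω) ∂μ) - F glam ≤ ν / (γ + T) ∧
    ‖(∫ ω, g T ω ∂μ) - glam‖ ^ 2 ≤ 2 * ν / (lam * (γ + T)) := by
  have hM : 0 < L + lam := by linarith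
  have hνσ : 2 / lam ^ 2 * (L + lam) * σ ^ 2 ≤ ν := hν ▸ le_max_left _ _
  have hvalue : (∫ ω, F (g T ω) ∂μ) - F glam ≤ ν / (γ + T) := by
    refine le_div_add_of_le_one_sub_two_div_mul_add
      (a := fun t => (∫ ω, F (g t ω) ∂μ) - F glam)
      (one_le_of_two_div_le_one_div hlam (le_add_of_nonneg_left hL) hγ hη1)
      (le_trans (by positivity) hνσ) (hν ▸ le_max_right _ _) (fun t ht => ?_) hT
    have hηM : η t * (L + lam) ≤ 1 :=
      hη t ht ▸ two_div_mul_le_one_of_two_div_le_one_div hlam hM hγ hη1 ht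
    simpa only [hupd t ht] using (hG t ht).integral_sub_smul_sub_le_of_eq_two_div (hℱ t) hlam
      (by positivity) (hη t ht) hM.le hηM hνσ (fun ω => hsc (g t ω)) (fun ω => hsmooth (g t ω))
      (hFint t) (by simpa only [hupd t ht] using hFint (t + 1)) glam
  refine ⟨hvalue, ?_⟩
  have hzero : F' glam = 0 :=
    hasGradientAt_eq_zero_of_isLocalMin (hgrad glam) (Eventually.of_forall hglam)
  have hdist : lam / 2 * ‖(∫ ω, g T ω ∂μ) - glam‖ ^ 2 ≤ ν / (γ + T) :=
    ((hzero ▸ hsc glam).mul_norm_integral_sub_sq_le hlam (hgint T) (hFint T)).trans hvalue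
  rw [le_div_iff₀ (by positivity)] at hdist ⊢
  linarith

/-- Convergence of expected SGD iterates (Proposition 3): for a `λ`-strongly
convex, `(L+λ)`-smooth objective `F` and SGD with unbiased stochastic gradients
of variance at most `σ²` and learning rates `η_t = 2/(λ(γ+t))`,
`E[F(g_T)] − F(g_λ) ≤ ν/(γ+T)` and `‖E[g_T] − g_λ‖² ≤ 2ν/(λ(γ+T))`. -/
theorem expected_sgd_convergence
    {H : Type*} [NormedAddCommGroup H] [InnerProductSpace ℝ H] [CompleteSpace H]
    {Ω : Type*} {m0 : MeasurableSpace Ω} (μ : Measure Ω) [IsProbabilityMeasure μ]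
    (ℱ : Filtration ℕ m0)
    (lam L σ γ : ℝ) (hlam : 0 < lam) (hL : 0 < L) (hσ : 0 < σ) (hγ : 0 < γ)
    (F : H → ℝ) (F' : H → H)
    (hgrad : ∀ g : H, HasGradientAt F (F' g) g)
    (hsc : ∀ g h : H, F g + ⟪F' g, h - g⟫ + lam / 2 * ‖h - g‖ ^ 2 ≤ F h)
    (hsmooth : ∀ g h : H, F (g + h) ≤ F g + ⟪F' g, h⟫ + (L + lam) / 2 * ‖h‖ ^ 2)
    (glam : H) (hglam : ∀ g : H, F glam ≤ F g)
    (η : ℕ → ℝ) (hη : ∀ t : ℕ, 1 ≤ t → η t = 2 / (lam * (γ + t)))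
    (hη1 : 2 / (lam * (γ + 1)) ≤ 1 / (L + lam))
    (g1 : H)
    (g : ℕ → Ω → H) (G : ℕ → Ω → H)
    (hadapt : ∀ t : ℕ, StronglyMeasurable[ℱ t] (g t))
    (hGmeas : ∀ t : ℕ, StronglyMeasurable[ℱ (t + 1)] (G t))
    (hinit : ∀ ω : Ω, g 1 ω = g1)
    (hGint : ∀ t : ℕ, Integrable (G t) μ)
    (hGsqint : ∀ t : ℕ, Integrable (fun ω => ‖G t ω‖ ^ 2) μ)
    (hGmean : ∀ t : ℕ, 1 ≤ t → μ[G t | ℱ t] =ᵐ[μ] fun ω => F' (g t ω))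
    (hGvar : ∀ t : ℕ, 1 ≤ t →
      μ[fun ω => ‖G t ω‖ ^ 2 | ℱ t] ≤ᵐ[μ] fun ω => ‖F' (g t ω)‖ ^ 2 + σ ^ 2)
    (hupd : ∀ t : ℕ, 1 ≤ t → ∀ ω : Ω, g (t + 1) ω = g t ω - η t • G t ω)
    (hFint : ∀ t : ℕ, Integrable (fun ω => F (g t ω)) μ)
    (hgint : ∀ t : ℕ, Integrable (g t) μ)
    (ν : ℝ)
    (hν : ν = max (2 / lam ^ 2 * (L + lam) * σ ^ 2) ((1 + γ) * (F g1 - F glam)))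
    (T : ℕ) (hT : 1 ≤ T) :
    (∫ ω, F (g T ω) ∂μ) - F glam ≤ ν / (γ + T) ∧
    ‖(∫ ω, g T ω ∂μ) - glam‖ ^ 2 ≤ 2 * ν / (lam * (γ + T)) :=
  expected_sgd_convergence_general μ ℱ ℱ.le lam L σ γ hlam hL.le hγ F F' hgrad hsc hsmooth
    glam hglam η hη hη1 g G
    (fun t ht => ⟨(memLp_two_iff_integrable_sq_norm (hGint t).1).2 (hGsqint t), hGmean t ht,
      hGvar t ht⟩)
    hupd hFint hgint ν (by simpa [hinit] using hν) T hT
end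

section
/- (One-sample stability of SGD iterates.) Fix sample sequences z = (z₁,…,z_T) and z' = (z₁,…,z_{t−1}, z'_t, z_{t+1},…,z_T) in Z^T differing only in the t-th coordinate. Let g_{s} and g'_{s} be the SGD iterates started from the same g₁ ∈ H with ‖g₁‖ ≤ (2η₁ + 1/λ)MR, updated by g_{s+1} = g_s − η_s(∇ℓ(g_s, z_s) + λ g_s) and g'_{s+1} = g'_s − η_s(∇ℓ(g'_s, z'_s) + λ g'_s), with decreasing learning rates η_s satisfying η₁ ≤ min{1/L, 1/(2λ)} and η_sλ ≤ 1. Then: (1) ‖g_{t+1} − g'_{t+1}‖ ≤ 6MR·η_t; and (2) for every s ≥ t+1, ‖g_{s+1} − g'_{s+1}‖ ≤ (1 − η_s λ)·‖g_s − g'_s‖. Consequently, when η_s = 2/(λ(γ+s)) with γ > 0, one has ‖g_{T+1} − g'_{T+1}‖ ≤ 12MR/(λ(γ+T)). -/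
open MeasureTheory Filter Set
open scoped RealInnerProductSpace

/-!
Up to step `t` the two runs coincide, and step `t` separates them by `η_t` times a difference of two
bounded gradients. From then on both runs apply the same map `x ↦ (1 - ηλ)x - η∇ℓ(x)`. The gradient
of a convex `L`-smooth function is `1/L`-cocoercive (Baillon–Haddad), so in the expansion of
`‖(1 - ηλ)(x - y) - η(∇ℓ(x) - ∇ℓ(y))‖²` the cross term absorbs the quadratic gradient term, which
leaves the factor `1 - ηλ`. For `η_s = 2/(λ(γ+s))` these factors are at most `(γ+s-1)/(γ+s)`, and
their product telescopes.
-/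

section Cocoercivity

lemma add_apply_sub_le_of_convexOn_of_hasFDerivAt {E : Type*} [NormedAddCommGroup E]
    [NormedSpace ℝ E] {s : Set E} {f : E → ℝ} {f' : StrongDual ℝ E} {x y : E}
    (hf : ConvexOn ℝ s f) (hx : x ∈ s) (hy : y ∈ s) (hf' : HasFDerivAt f f' x) :
    f x + f' (y - x) ≤ f y := by
  let segment : ℝ →ᵃ[ℝ] E := AffineMap.lineMap x y
  have hconv : ConvexOn ℝ (segment ⁻¹' s) (f ∘ segment) := hf.comp_affineMap segment
  have hderiv : HasDerivAt (f ∘ segment) (f' (y - x)) 0 := by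
    refine HasFDerivAt.comp_hasDerivAt (0 : ℝ) ?_ AffineMap.hasDerivAt_lineMap
    rwa [AffineMap.lineMap_apply_zero]
  have hslope := hconv.le_slope_of_hasDerivAt (x := 0) (y := 1)
    (by simpa [segment] using hx) (by simpa [segment] using hy) zero_lt_one hderiv
  simp only [slope_def_field, Function.comp_apply, segment, AffineMap.lineMap_apply_one,
    AffineMap.lineMap_apply_zero, sub_zero, div_one] at hslope
  linarith

variable {H : Type*} [NormedAddCommGroup H] [InnerProductSpace ℝ H] {f : H → ℝ} {F : H → H}
  {β L : ℝ}

lemma add_inner_add_sq_norm_sub_div_le {p q x y : H} (hL : 0 < L)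
    (hsub : ∀ w, f x + ⟪p, w - x⟫ ≤ f w)
    (hsmooth : ∀ h, f (y + h) ≤ f y + ⟪q, h⟫ + L / 2 * ‖h‖ ^ 2) :
    f x + ⟪p, y - x⟫ + ‖q - p‖ ^ 2 / (2 * L) ≤ f y := by
  -- The displacement `h` minimises `⟪q - p, h⟫ + L / 2 * ‖h‖ ^ 2`.
  let h : H := -(L⁻¹ • (q - p))
  have hlower : f x + ⟪p, y - x⟫ + ⟪p, h⟫ ≤ f (y + h) := by
    have := hsub (y + h)
    rwa [add_sub_right_comm, inner_add_right, ← add_assoc] at this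
  have hmin : ⟪q, h⟫ - ⟪p, h⟫ + L / 2 * ‖h‖ ^ 2 = -(‖q - p‖ ^ 2 / (2 * L)) := by
    rw [← inner_sub_left, norm_neg, norm_smul, inner_neg_right, inner_smul_right,
      real_inner_self_eq_norm_sq, mul_pow, Real.norm_eq_abs, sq_abs]
    field
  linarith [hsmooth h]

/-- Cocoercivity of the operator `F` with constant `β`, which for the gradient of a convex function
encodes `1/β`-smoothness. The sign of `β` is left free. -/
def IsCocoercive (β : ℝ) (F : H → H) : Prop :=
  ∀ x y, β * ‖F x - F y‖ ^ 2 ≤ ⟪x - y, F x - F y⟫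

theorem isCocoercive_of_convexOn_of_smooth (hL : 0 < L) (hconv : ConvexOn ℝ univ f)
    (hgrad : ∀ x, HasFDerivAt f (innerSL ℝ (F x)) x)
    (hsmooth : ∀ x h, f (x + h) ≤ f x + ⟪F x, h⟫ + L / 2 * ‖h‖ ^ 2) :
    IsCocoercive (1 / L) F := by
  intro x y
  have hsub (u w : H) : f u + ⟪F u, w - u⟫ ≤ f w :=
    add_apply_sub_le_of_convexOn_of_hasFDerivAt hconv (mem_univ u) (mem_univ w) (hgrad u)
  have hxy := add_inner_add_sq_norm_sub_div_le hL (hsub x) (hsmooth y)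
  have hyx := add_inner_add_sq_norm_sub_div_le hL (hsub y) (hsmooth x)
  rw [norm_sub_rev] at hxy
  calc 1 / L * ‖F x - F y‖ ^ 2
      = ‖F x - F y‖ ^ 2 / (2 * L) + ‖F x - F y‖ ^ 2 / (2 * L) := by field
    _ ≤ -⟪F x, y - x⟫ - ⟪F y, x - y⟫ := by linarith
    _ = ⟪x - y, F x - F y⟫ := by
      rw [← neg_sub x y, inner_neg_right, neg_neg, ← inner_sub_left, real_inner_comm]

lemma norm_smul_sub_smul_le_of_mul_sq_norm_le_inner {a η : ℝ} {d D : H} (ha : 0 ≤ a) (hη : 0 ≤ η)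
    (hηβ : η ≤ 2 * β * a) (hβ : β * ‖D‖ ^ 2 ≤ ⟪d, D⟫) :
    ‖a • d - η • D‖ ≤ a * ‖d‖ := by
  have habsorb : η * ‖D‖ ^ 2 ≤ 2 * a * ⟪d, D⟫ :=
    calc η * ‖D‖ ^ 2 ≤ 2 * β * a * ‖D‖ ^ 2 := by gcongr
      _ = 2 * a * (β * ‖D‖ ^ 2) := by ring
      _ ≤ 2 * a * ⟪d, D⟫ := by gcongr
  refine le_of_sq_le_sq ?_ (by positivity)
  calc ‖a • d - η • D‖ ^ 2
      = (a * ‖d‖) ^ 2 + η * (η * ‖D‖ ^ 2 - 2 * a * ⟪d, D⟫) := by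
        rw [norm_sub_sq_real, norm_smul, norm_smul, real_inner_smul_left, real_inner_smul_right,
          mul_pow, mul_pow, mul_pow, Real.norm_eq_abs, Real.norm_eq_abs, sq_abs, sq_abs]
        ring
    _ ≤ (a * ‖d‖) ^ 2 :=
      add_le_of_nonpos_right (mul_nonpos_of_nonneg_of_nonpos hη (sub_nonpos.2 habsorb))

end Cocoercivity

section RidgeStep

variable {H : Type*} [NormedAddCommGroup H]

/-- One gradient step of size `η` for the ridge-regularised loss `ℓ + (lam / 2) * ‖·‖ ^ 2`, where
`F` stands for the gradient of the unregularised loss `ℓ`. -/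
def ridgeStep [NormedSpace ℝ H] (η lam : ℝ) (F : H → H) (x : H) : H :=
  x - η • (F x + lam • x)

lemma norm_ridgeStep_sub_ridgeStep_le_of_bound [NormedSpace ℝ H] {η G : ℝ} {F F' : H → H} {x : H}
    (lam : ℝ) (hη : 0 ≤ η) (hF : ‖F x‖ ≤ G) (hF' : ‖F' x‖ ≤ G) :
    ‖ridgeStep η lam F x - ridgeStep η lam F' x‖ ≤ 2 * G * η := by
  have hdiff : ridgeStep η lam F x - ridgeStep η lam F' x = η • (F' x - F x) := by
    unfold ridgeStep
    module
  calc ‖ridgeStep η lam F x - ridgeStep η lam F' x‖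
      = η * ‖F' x - F x‖ := by rw [hdiff, norm_smul, Real.norm_of_nonneg hη]
    _ ≤ η * (G + G) := by gcongr; exact norm_sub_le_of_le hF' hF
    _ = 2 * G * η := by ring

lemma IsCocoercive.norm_ridgeStep_sub_ridgeStep_le [InnerProductSpace ℝ H] {β η lam : ℝ}
    {F : H → H} (hF : IsCocoercive β F) (hη : 0 ≤ η) (hlam : η * lam ≤ 1)
    (hηβ : η ≤ 2 * β * (1 - η * lam)) (x y : H) :
    ‖ridgeStep η lam F x - ridgeStep η lam F y‖ ≤ (1 - η * lam) * ‖x - y‖ := by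
  have hdiff : ridgeStep η lam F x - ridgeStep η lam F y =
      (1 - η * lam) • (x - y) - η • (F x - F y) := by
    unfold ridgeStep
    module
  rw [hdiff]
  exact norm_smul_sub_smul_le_of_mul_sq_norm_le_inner (sub_nonneg.2 hlam) hη hηβ (hF x y)

end RidgeStep

/-- `g` is a run of SGD on the samples `z` with step sizes `η` for the loss with gradient `ℓ'` and
regularisation `lam`. As in the paper, steps are numbered from `1`; `g 0` is unconstrained. -/
def IsSGDRun {H Z : Type*} [NormedAddCommGroup H] [NormedSpace ℝ H] (ℓ' : H → Z → H) (lam : ℝ)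
    (η : ℕ → ℝ) (z : ℕ → Z) (g : ℕ → H) : Prop :=
  ∀ s, 1 ≤ s → g (s + 1) = ridgeStep (η s) lam (fun x => ℓ' x (z s)) (g s)

lemma IsSGDRun.eq_of_forall_lt_eq {H Z : Type*} [NormedAddCommGroup H] [NormedSpace ℝ H]
    {ℓ' : H → Z → H} {lam : ℝ} {η : ℕ → ℝ} {z z' : ℕ → Z} {g g' : ℕ → H} {t : ℕ}
    (hg : IsSGDRun ℓ' lam η z g) (hg' : IsSGDRun ℓ' lam η z' g') (hinit : g 1 = g' 1)
    (ht : 1 ≤ t) (hz : ∀ s < t, z s = z' s) : g t = g' t := by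
  induction t, ht using Nat.le_induction with
  | base => exact hinit
  | succ n hn ih =>
    rw [hg n hn, hg' n hn, hz n n.lt_succ_self, ih fun s hs => hz s (hs.trans n.lt_succ_self)]

lemma le_div_of_le_one_sub_div_mul {a : ℕ → ℝ} {c γ C : ℝ} {t : ℕ} (ha : ∀ n, 0 ≤ a n) (hc : 1 ≤ c)
    (hγ : 0 < γ + t) (hinit : a t ≤ C / (γ + t))
    (hstep : ∀ n, t ≤ n → a (n + 1) ≤ (1 - c / (γ + ↑(n + 1))) * a n) {n : ℕ} (hn : t ≤ n) :
    a n ≤ C / (γ + n) := by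
  induction n, hn using Nat.le_induction with
  | base => exact hinit
  | succ n hn ih =>
    have hpos : 0 < γ + n := hγ.trans_le (by gcongr)
    have hcast : γ + ↑(n + 1) = γ + n + 1 := by rw [Nat.cast_succ, add_assoc]
    calc a (n + 1) ≤ (1 - c / (γ + n + 1)) * a n := hcast ▸ hstep n hn
      _ ≤ (1 - 1 / (γ + n + 1)) * a n := by
        have := ha n
        gcongr
      _ = (γ + n) / (γ + n + 1) * a n := by
        rw [one_sub_div (by positivity), add_sub_cancel_right]
      _ ≤ (γ + n) / (γ + n + 1) * (C / (γ + n)) := by gcongr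
      _ = C / (γ + ↑(n + 1)) := by
        rw [hcast]
        field

/-- The condition `η_s (L + 2λ) ≤ 2` rewrites as `η_s ≤ (2 / L) (1 - η_s λ)`, the range in which
`1/L`-cocoercivity makes the regularised step contract by the factor `1 - η_s λ`. -/
theorem sgd_one_sample_stability_general
    {H Z : Type*} [NormedAddCommGroup H] [InnerProductSpace ℝ H]
    {lam G L : ℝ} (hlam : 0 < lam) (hL : 0 < L)
    {ℓ : H → Z → ℝ} {ℓ' : H → Z → H}
    (hconv : ∀ z, ConvexOn ℝ univ fun x => ℓ x z)
    (hgrad : ∀ z x, HasFDerivAt (fun x => ℓ x z) (innerSL ℝ (ℓ' x z)) x)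
    (hsmooth : ∀ z x h, ℓ (x + h) z ≤ ℓ x z + ⟪ℓ' x z, h⟫ + L / 2 * ‖h‖ ^ 2)
    (hgradbd : ∀ z x, ‖ℓ' x z‖ ≤ G)
    {t : ℕ} (ht : 1 ≤ t) {z z' : ℕ → Z} (hzz' : ∀ s, s ≠ t → z s = z' s)
    {η : ℕ → ℝ} (hηnonneg : ∀ s, 1 ≤ s → 0 ≤ η s) (hη : ∀ s, 1 ≤ s → η s * (L + 2 * lam) ≤ 2)
    {g g' : ℕ → H} (hinit : g 1 = g' 1)
    (hg : IsSGDRun ℓ' lam η z g) (hg' : IsSGDRun ℓ' lam η z' g') :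
    ‖g (t + 1) - g' (t + 1)‖ ≤ 2 * G * η t ∧
    (∀ s, t + 1 ≤ s → ‖g (s + 1) - g' (s + 1)‖ ≤ (1 - η s * lam) * ‖g s - g' s‖) ∧
    (∀ γ : ℝ, 0 < γ → (∀ s : ℕ, 1 ≤ s → η s = 2 / (lam * (γ + s))) →
      ∀ T, t ≤ T → ‖g (T + 1) - g' (T + 1)‖ ≤ 4 * G / (lam * (γ + T))) := by
  have hjump : ‖g (t + 1) - g' (t + 1)‖ ≤ 2 * G * η t := by
    rw [hg t ht, hg' t ht, hg.eq_of_forall_lt_eq hg' hinit ht fun s hs => hzz' s hs.ne]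
    exact norm_ridgeStep_sub_ridgeStep_le_of_bound lam (hηnonneg t ht) (hgradbd _ _) (hgradbd _ _)
  have hcontract (s : ℕ) (hs : t + 1 ≤ s) :
      ‖g (s + 1) - g' (s + 1)‖ ≤ (1 - η s * lam) * ‖g s - g' s‖ := by
    have hs₁ : 1 ≤ s := by lia
    have hηs := hηnonneg s hs₁
    have hηL : η s * L ≤ 2 * (1 - η s * lam) := by linarith [hη s hs₁]
    have hηlam : η s * lam ≤ 1 := by linarith [mul_nonneg hηs hL.le]
    have hηβ : η s ≤ 2 * (1 / L) * (1 - η s * lam) := by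
      rwa [mul_one_div, div_mul_eq_mul_div, le_div_iff₀ hL]
    have hcoco : IsCocoercive (1 / L) fun x => ℓ' x (z' s) :=
      isCocoercive_of_convexOn_of_smooth hL (hconv _) (hgrad _) (hsmooth _)
    rw [hg s hs₁, hg' s hs₁, hzz' s (by lia)]
    exact hcoco.norm_ridgeStep_sub_ridgeStep_le hηs hηlam hηβ _ _
  refine ⟨hjump, hcontract, fun γ hγ hηγ T hT => ?_⟩
  rw [← div_div]
  refine le_div_of_le_one_sub_div_mul (a := fun n => ‖g (n + 1) - g' (n + 1)‖) (c := 2) (t := t)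
    (fun n => norm_nonneg _) one_le_two (by positivity) (hjump.trans_eq ?_) (fun n hn => ?_) hT
  · rw [hηγ t ht]
    field
  · have hrate : η (n + 1) * lam = 2 / (γ + ↑(n + 1)) := by
      rw [hηγ (n + 1) (by lia)]
      field
    exact hrate ▸ hcontract (n + 1) (by lia)

lemma mul_add_two_mul_le_two_of_le_min {lam L η : ℝ} (hlam : 0 < lam) (hL : 0 < L)
    (hη : η ≤ min (1 / L) (1 / (2 * lam))) : η * (L + 2 * lam) ≤ 2 := by
  have hηL : η * L ≤ 1 := (le_div_iff₀ hL).1 (hη.trans (min_le_left _ _))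
  have hηlam : η * (2 * lam) ≤ 1 := (le_div_iff₀ (by positivity)).1 (hη.trans (min_le_right _ _))
  linarith

/-- One-sample stability of SGD iterates: two SGD runs whose sample sequences
differ only in the `t`-th sample stay close, with geometric contraction after
step `t`; consequently, with `η_s = 2/(λ(γ+s))`, the final iterates differ by
at most `12MR/(λ(γ+T))`. -/
theorem sgd_one_sample_stability
    {H : Type*} [NormedAddCommGroup H] [InnerProductSpace ℝ H] [CompleteSpace H]
    {Z : Type*}
    (lam M R L : ℝ) (hlam : 0 < lam) (hM : 0 < M) (hR : 0 < R) (hL : 0 < L)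
    (ℓ : H → Z → ℝ) (ℓ' : H → Z → H)
    (hconv : ∀ z : Z, ConvexOn ℝ Set.univ fun g => ℓ g z)
    (hgrad : ∀ z : Z, ∀ g : H, HasGradientAt (fun g => ℓ g z) (ℓ' g z) g)
    (hsmooth : ∀ z : Z, ∀ g h : H,
      ℓ (g + h) z ≤ ℓ g z + ⟪ℓ' g z, h⟫ + L / 2 * ‖h‖ ^ 2)
    (hgradbd : ∀ z : Z, ∀ g : H, ‖ℓ' g z‖ ≤ M * R)
    (T t : ℕ) (ht : 1 ≤ t) (htT : t ≤ T)
    (z z' : ℕ → Z) (hzz' : ∀ s : ℕ, s ≠ t → z s = z' s)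
    (η : ℕ → ℝ)
    (hηpos : ∀ s : ℕ, 1 ≤ s → 0 < η s)
    (hηdec : ∀ s : ℕ, 1 ≤ s → η (s + 1) ≤ η s)
    (hη1 : η 1 ≤ min (1 / L) (1 / (2 * lam)))
    (hηlam : ∀ s : ℕ, 1 ≤ s → η s * lam ≤ 1)
    (g g' : ℕ → H)
    (hinit : g 1 = g' 1)
    (hinitbd : ‖g 1‖ ≤ (2 * η 1 + 1 / lam) * M * R)
    (hupd : ∀ s : ℕ, 1 ≤ s → g (s + 1) = g s - η s • (ℓ' (g s) (z s) + lam • g s))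
    (hupd' : ∀ s : ℕ, 1 ≤ s → g' (s + 1) = g' s - η s • (ℓ' (g' s) (z' s) + lam • g' s)) :
    ‖g (t + 1) - g' (t + 1)‖ ≤ 6 * M * R * η t ∧
    (∀ s : ℕ, t + 1 ≤ s → ‖g (s + 1) - g' (s + 1)‖ ≤ (1 - η s * lam) * ‖g s - g' s‖) ∧
    (∀ γ : ℝ, 0 < γ → (∀ s : ℕ, 1 ≤ s → η s = 2 / (lam * (γ + s))) →
      ‖g (T + 1) - g' (T + 1)‖ ≤ 12 * M * R / (lam * (γ + T))) := by
  have hη (s : ℕ) (hs : 1 ≤ s) : η s ≤ η 1 :=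
    antitoneOn_nat_Ici_of_succ_le hηdec self_mem_Ici hs hs
  obtain ⟨hjump, hcontract, hfinal⟩ := sgd_one_sample_stability_general hlam hL hconv
    (fun z x => (hgrad z x).hasFDerivAt) hsmooth hgradbd ht hzz' (fun s hs => (hηpos s hs).le)
    (fun s hs => mul_add_two_mul_le_two_of_le_min hlam hL ((hη s hs).trans hη1)) hinit hupd hupd'
  have hηt := hηpos t ht
  refine ⟨hjump.trans ?_, hcontract, fun γ hγ hηγ => (hfinal γ hγ hηγ T htT).trans ?_⟩ <;>
    rw [← mul_assoc] <;> gcongr <;> norm_num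
end

section
/- (Convergence of the regularization path.) Let H be a real Hilbert space and L : H → ℝ a convex continuous function. Suppose g_* ∈ H is the unique minimizer of L over H (i.e. L(g_*) ≤ L(g) for all g, and any g with L(g) = L(g_*) equals g_*). For each λ > 0 let g_λ ∈ H be a minimizer of L_λ(g) = L(g) + (λ/2)‖g‖². Then g_λ converges to g_* in norm as λ → 0⁺, i.e. ‖g_λ − g_*‖ → 0. -/
open MeasureTheory Filter Set
open scoped RealInnerProductSpace

/-!
A minimizer `y` of `L + (μ/2)‖·‖²` is the point of least norm of its own sublevel set
`{z | L z ≤ L y}`, which is convex, so that `‖x - y‖² ≤ ‖x‖² - ‖y‖²` whenever `L x ≤ L y`.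
As `μ` decreases to `0`, the values `L (g μ)` decrease and the norms `‖g μ‖` increase, bounded by
the norm of any minimizer of `L`. The inequality therefore makes the path Cauchy. By
semicontinuity its limit `h` minimizes `L`. If `x` is the minimizer of least norm, then
`‖x - g μ‖² ≤ ‖x‖² - ‖g μ‖²`, whose right-hand side tends to `‖x‖² - ‖h‖² ≤ 0`.
-/

open scoped Topology

theorem cauchy_map_of_dist_sq_le {ι X : Type*} [PseudoMetricSpace X] {l : Filter ι} [l.NeBot]
    {f : ι → X} {φ : ι → ℝ} {c : ℝ} (hφ : Tendsto φ l (𝓝 c))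
    (hf : ∀ᶠ p in l ×ˢ l, dist (f p.1) (f p.2) ^ 2 ≤ |φ p.1 - φ p.2|) :
    Cauchy (map f l) := by
  have hφ_sub : Tendsto (fun p : ι × ι => |φ p.1 - φ p.2|) (l ×ˢ l) (𝓝 0) := by
    simpa using ((hφ.comp tendsto_fst).sub (hφ.comp tendsto_snd)).abs
  have h_sq : Tendsto (fun p : ι × ι => dist (f p.1) (f p.2) ^ 2) (l ×ˢ l) (𝓝 0) :=
    squeeze_zero' (.of_forall fun _ => sq_nonneg _) hf hφ_sub
  refine cauchy_map_iff.2 ⟨‹_›, tendsto_uniformity_iff_dist_tendsto_zero.2 ?_⟩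
  simpa [Real.sqrt_sq dist_nonneg] using h_sq.sqrt

theorem norm_sub_sq_le_of_isMinOn_norm {E : Type*} [NormedAddCommGroup E] [InnerProductSpace ℝ E]
    {K : Set E} (hK : Convex ℝ K) {x y : E} (hx : x ∈ K) (hy : y ∈ K)
    (hmin : IsMinOn (‖·‖) K y) :
    ‖x - y‖ ^ 2 ≤ ‖x‖ ^ 2 - ‖y‖ ^ 2 := by
  have : Nonempty K := ⟨⟨y, hy⟩⟩
  have h_inf : ‖0 - y‖ = ⨅ w : K, ‖0 - (w : E)‖ := by
    simp only [zero_sub, norm_neg]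
    exact le_antisymm (le_ciInf fun w => hmin w.2)
      (ciInf_le ⟨0, forall_mem_range.2 fun _ => norm_nonneg _⟩ (⟨y, hy⟩ : K))
  have h_inner : 0 ≤ ⟪y, x - y⟫ := by
    simpa using (norm_eq_iInf_iff_real_inner_le_zero hK hy).1 h_inf x hx
  have h_expand := norm_add_sq_real y (x - y)
  rw [add_sub_cancel] at h_expand
  linarith

section TikhonovRegularization

variable {E : Type*} [SeminormedAddCommGroup E] {L : E → ℝ} {s : Set E}

/-- The Tikhonov regularization `L_μ(x) = L(x) + (μ/2)‖x‖²` of the objective `L`. -/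
noncomputable def tikhonov (L : E → ℝ) (μ : ℝ) (x : E) : ℝ :=
  L x + μ / 2 * ‖x‖ ^ 2

/-- A regularization path of `L` on the constraint set `s`: a choice, for each `μ > 0`, of a
minimizer `g μ` over `s` of the Tikhonov regularization of `L`. The values of `g` at `μ ≤ 0` are
unconstrained. -/
def IsTikhonovPath (L : E → ℝ) (s : Set E) (g : ℝ → E) : Prop :=
  ∀ ⦃μ : ℝ⦄, 0 < μ → g μ ∈ s ∧ IsMinOn (tikhonov L μ) s (g μ)

theorem isMinOn_norm_of_isMinOn_tikhonov {μ : ℝ} {y : E} (hμ : 0 < μ)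
    (hy : IsMinOn (tikhonov L μ) s y) :
    IsMinOn (‖·‖) {z ∈ s | L z ≤ L y} y := by
  rintro z ⟨hzs, hzL⟩
  have h_tikhonov : L y + μ / 2 * ‖y‖ ^ 2 ≤ L z + μ / 2 * ‖z‖ ^ 2 := hy hzs
  have h_sq : ‖y‖ ^ 2 ≤ ‖z‖ ^ 2 :=
    le_of_mul_le_mul_left (by linarith) (half_pos hμ)
  exact le_of_sq_le_sq h_sq (norm_nonneg z)

namespace IsTikhonovPath

variable {g : ℝ → E} (hg : IsTikhonovPath L s g)
include hg

theorem monotoneOn_comp : MonotoneOn (L ∘ g) (Ioi 0) := by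
  intro μ hμ ν hν hμν
  obtain rfl | hlt := hμν.eq_or_lt
  · rfl
  have h_at_μ : L (g μ) + μ / 2 * ‖g μ‖ ^ 2 ≤ L (g ν) + μ / 2 * ‖g ν‖ ^ 2 :=
    (hg hμ).2 (hg hν).1
  have h_at_ν : L (g ν) + ν / 2 * ‖g ν‖ ^ 2 ≤ L (g μ) + ν / 2 * ‖g μ‖ ^ 2 :=
    (hg hν).2 (hg hμ).1
  -- Weighting the two comparisons by `ν` and `μ` cancels the norms.
  have h_weighted : (ν - μ) * L (g μ) ≤ (ν - μ) * L (g ν) := by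
    linarith [mul_le_mul_of_nonneg_left h_at_μ hν.le, mul_le_mul_of_nonneg_left h_at_ν hμ.le]
  exact le_of_mul_le_mul_left h_weighted (sub_pos.2 hlt)

theorem antitoneOn_norm : AntitoneOn (fun μ => ‖g μ‖) (Ioi 0) := fun _ hμ _ hν hμν =>
  isMinOn_norm_of_isMinOn_tikhonov hν (hg hν).2 ⟨(hg hμ).1, hg.monotoneOn_comp hμ hν hμν⟩

theorem norm_le_of_isMinOn {x : E} (hx : x ∈ s) (hmin : IsMinOn L s x) {μ : ℝ} (hμ : 0 < μ) :
    ‖g μ‖ ≤ ‖x‖ :=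
  isMinOn_norm_of_isMinOn_tikhonov hμ (hg hμ).2 ⟨hx, hmin (hg hμ).1⟩

theorem exists_tendsto_norm_sq {x : E} (hx : x ∈ s) (hmin : IsMinOn L s x) :
    ∃ c, Tendsto (fun μ => ‖g μ‖ ^ 2) (𝓝[>] 0) (𝓝 c) := by
  have h_anti : AntitoneOn (fun μ => ‖g μ‖ ^ 2) (Ioi 0) := fun _ hμ _ hν hμν =>
    pow_le_pow_left₀ (norm_nonneg _) (hg.antitoneOn_norm hμ hν hμν) 2
  have h_bdd : BddAbove ((fun μ => ‖g μ‖ ^ 2) '' Ioi 0) :=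
    ⟨‖x‖ ^ 2, forall_mem_image.2 fun _ hμ =>
      pow_le_pow_left₀ (norm_nonneg _) (hg.norm_le_of_isMinOn hx hmin hμ) 2⟩
  exact ⟨_, h_anti.tendsto_nhdsGT h_bdd⟩

theorem isMinOn_of_tendsto (hL : LowerSemicontinuousOn L s) {h : E} (hh : h ∈ s)
    (hgh : Tendsto g (𝓝[>] 0) (𝓝 h)) : IsMinOn L s h := by
  intro x hx
  have hgs : ∀ᶠ μ in 𝓝[>] 0, g μ ∈ s :=
    eventually_mem_nhdsWithin.mono fun _ hμ => (hg hμ).1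
  have h_bound : Tendsto (fun μ => tikhonov L μ x) (𝓝[>] 0) (𝓝 (L x)) := by
    have h_cont : Continuous fun μ => tikhonov L μ x := by unfold tikhonov; fun_prop
    simpa [tikhonov] using (h_cont.tendsto 0).mono_left nhdsWithin_le_nhds
  refine le_of_forall_lt_imp_le_of_dense fun y hy => ge_of_tendsto h_bound ?_
  filter_upwards [eventually_mem_nhdsWithin,
    (tendsto_nhdsWithin_iff.2 ⟨hgh, hgs⟩).eventually (hL h hh y hy)] with μ hμ hyμ
  have hμ : 0 < μ := hμ
  calc y ≤ L (g μ) := hyμ.le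
    _ ≤ tikhonov L μ (g μ) := le_add_of_nonneg_right (by positivity)
    _ ≤ tikhonov L μ x := (hg hμ).2 hx

end IsTikhonovPath

end TikhonovRegularization

section QuasiconvexObjective

variable {H : Type*} [NormedAddCommGroup H] [InnerProductSpace ℝ H] {L : H → ℝ} {s : Set H}

theorem norm_sub_sq_le_of_isMinOn_tikhonov (hL : QuasiconvexOn ℝ s L) {μ : ℝ} {x y : H}
    (hμ : 0 < μ) (hx : x ∈ s) (hy : y ∈ s) (hmin : IsMinOn (tikhonov L μ) s y)
    (hxy : L x ≤ L y) : ‖x - y‖ ^ 2 ≤ ‖x‖ ^ 2 - ‖y‖ ^ 2 :=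
  norm_sub_sq_le_of_isMinOn_norm (hL (L y)) ⟨hx, hxy⟩ ⟨hy, le_rfl⟩
    (isMinOn_norm_of_isMinOn_tikhonov hμ hmin)

namespace IsTikhonovPath

variable {g : ℝ → H} (hg : IsTikhonovPath L s g) (hL : QuasiconvexOn ℝ s L)
include hg hL

theorem dist_sq_le {μ ν : ℝ} (hμ : 0 < μ) (hν : 0 < ν) :
    dist (g μ) (g ν) ^ 2 ≤ |‖g μ‖ ^ 2 - ‖g ν‖ ^ 2| := by
  wlog hμν : μ ≤ ν generalizing μ ν
  · rw [dist_comm, abs_sub_comm]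
    exact this hν hμ (le_of_not_ge hμν)
  rw [dist_eq_norm]
  exact (norm_sub_sq_le_of_isMinOn_tikhonov hL hν (hg hμ).1 (hg hν).1 (hg hν).2
    (hg.monotoneOn_comp hμ hν hμν)).trans (le_abs_self _)

theorem cauchy_map {x : H} (hx : x ∈ s) (hmin : IsMinOn L s x) :
    Cauchy (map g (𝓝[>] 0)) := by
  obtain ⟨_, hc⟩ := hg.exists_tendsto_norm_sq hx hmin
  refine cauchy_map_of_dist_sq_le hc ?_
  filter_upwards [prod_mem_prod self_mem_nhdsWithin self_mem_nhdsWithin] with _ hp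
  exact hg.dist_sq_le hL hp.1 hp.2

end IsTikhonovPath

end QuasiconvexObjective

theorem regularization_path_convergence_general
    {H : Type*} [NormedAddCommGroup H] [InnerProductSpace ℝ H] {s : Set H} (hs : IsComplete s)
    {L : H → ℝ} (hL_quasi : QuasiconvexOn ℝ s L) (hL_lsc : LowerSemicontinuousOn L s)
    {x : H} (hx : x ∈ s) (hmin : IsMinOn L s x) (hnorm : IsMinOn (‖·‖) {z ∈ s | L z ≤ L x} x)
    {g : ℝ → H} (hg : IsTikhonovPath L s g) :
    Tendsto g (𝓝[>] 0) (𝓝 x) := by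
  have hgs : map g (𝓝[>] 0) ≤ 𝓟 s :=
    tendsto_principal.2 (eventually_mem_nhdsWithin.mono fun _ hμ => (hg hμ).1)
  obtain ⟨h, hh, (hgh : Tendsto g (𝓝[>] 0) (𝓝 h))⟩ := hs _ (hg.cauchy_map hL_quasi hx hmin) hgs
  have hxh : ‖x‖ ≤ ‖h‖ := hnorm ⟨hh, hg.isMinOn_of_tendsto hL_lsc hh hgh hx⟩
  have h_sq : ‖x - h‖ ^ 2 ≤ ‖x‖ ^ 2 - ‖h‖ ^ 2 := by
    refine le_of_tendsto_of_tendsto ((tendsto_const_nhds.sub hgh).norm.pow 2)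
      (tendsto_const_nhds.sub (hgh.norm.pow 2)) ?_
    filter_upwards [self_mem_nhdsWithin] with μ hμ
    exact norm_sub_sq_le_of_isMinOn_tikhonov hL_quasi hμ hx (hg hμ).1 (hg hμ).2
      (hmin (hg hμ).1)
  have hx_eq : x = h := by
    rw [← sub_eq_zero, ← norm_eq_zero, ← sq_eq_zero_iff]
    linarith [sq_nonneg ‖x - h‖, pow_le_pow_left₀ (norm_nonneg x) hxh 2]
  rwa [hx_eq]

/-- Convergence of the regularization path: the minimizers `g_λ` of the
regularized risk `L(g) + (λ/2)‖g‖²` converge in norm to the unique minimizer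
`g_*` of the convex continuous function `L` as `λ → 0⁺`. -/
theorem regularization_path_convergence
    {H : Type*} [NormedAddCommGroup H] [InnerProductSpace ℝ H] [CompleteSpace H]
    (L : H → ℝ) (hLconv : ConvexOn ℝ Set.univ L) (hLcont : Continuous L)
    (gstar : H) (hmin : ∀ g : H, L gstar ≤ L g)
    (huniq : ∀ g : H, L g = L gstar → g = gstar)
    (glam : ℝ → H)
    (hglam : ∀ lam : ℝ, 0 < lam → ∀ g : H,
      L (glam lam) + lam / 2 * ‖glam lam‖ ^ 2 ≤ L g + lam / 2 * ‖g‖ ^ 2) :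
    Filter.Tendsto (fun lam => ‖glam lam - gstar‖)
      (nhdsWithin 0 (Set.Ioi (0 : ℝ))) (nhds 0) := by
  have hnorm : IsMinOn (‖·‖) {z ∈ univ | L z ≤ L gstar} gstar := fun z hz =>
    (congrArg norm (huniq z (hz.2.antisymm (hmin z)))).ge
  exact tendsto_iff_norm_sub_tendsto_zero.1 <| regularization_path_convergence_general
    isComplete_univ hLconv.quasiconvexOn (hLcont.lowerSemicontinuous.lowerSemicontinuousOn univ)
    (mem_univ gstar) (fun g _ => hmin g) hnorm
    fun lam hlam => ⟨mem_univ _, fun g _ => hglam lam hlam g⟩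
end

section
/- (Co-coercivity of gradients of smooth convex functions.) Let H be a real Hilbert space, L > 0, and f : H → ℝ convex and Fréchet differentiable with gradient ∇f, satisfying the L-smoothness bound f(g+h) ≤ f(g) + ⟨∇f(g), h⟩ + (L/2)‖h‖² for all g, h ∈ H. Then for all u, v ∈ H, ⟨∇f(u) − ∇f(v), u − v⟩ ≥ (1/L)‖∇f(u) − ∇f(v)‖². -/
open MeasureTheory Filter Set
open scoped RealInnerProductSpace

/-!
Fix `u` and `v`. Convexity bounds `f (u + h)` from below by the tangent at `v`, smoothness bounds it
from above by the parabola at `u`. Comparing the two for every `h`, and optimizing over `h`, gains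
`1 / (2 * L) * ‖f' u - f' v‖ ^ 2` in the tangent inequality at `v`. Adding the improved inequality
to the one with `u` and `v` exchanged cancels the values of `f`. Only the dual norm of the
derivatives enters, so the argument works in every normed space.
-/

section NormedSpace

variable {E : Type*} [NormedAddCommGroup E] [NormedSpace ℝ E]

theorem add_apply_sub_le_of_convexOn_of_hasFDerivWithinAt {s : Set E} {f : E → ℝ}
    {φ : StrongDual ℝ E} {x y : E} (hf : ConvexOn ℝ s f) (hx : x ∈ s) (hy : y ∈ s)
    (hφ : HasFDerivWithinAt f φ s x) : f x + φ (y - x) ≤ f y := by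
  let ℓ : ℝ →ᵃ[ℝ] E := AffineMap.lineMap x y
  have hℓ₀ : ℓ 0 = x := AffineMap.lineMap_apply_zero x y
  have hℓ₁ : ℓ 1 = y := AffineMap.lineMap_apply_one x y
  have hconv : ConvexOn ℝ (ℓ ⁻¹' s) (f ∘ ℓ) := hf.comp_affineMap ℓ
  have hderiv : HasDerivWithinAt (f ∘ ℓ) (φ (y - x)) (ℓ ⁻¹' s) 0 :=
    HasFDerivWithinAt.comp_hasDerivWithinAt 0 (hℓ₀.symm ▸ hφ)
      AffineMap.hasDerivAt_lineMap.hasDerivWithinAt (mapsTo_preimage ℓ s)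
  have hslope : φ (y - x) ≤ slope (f ∘ ℓ) 0 1 :=
    hconv.le_slope_of_hasDerivWithinAt (by rwa [mem_preimage, hℓ₀]) (by rwa [mem_preimage, hℓ₁])
      one_pos hderiv
  have hslope_eq : slope (f ∘ ℓ) 0 1 = f y - f x := by
    simp [slope_def_field, hℓ₀, hℓ₁]
  linarith

theorem sq_norm_le_of_forall_apply_le_add_mul_sq {φ : StrongDual ℝ E} {a c : ℝ} (ha : 0 ≤ a)
    (h : ∀ x, φ x ≤ c + a * ‖x‖ ^ 2) : ‖φ‖ ^ 2 ≤ 4 * a * c := by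
  have hc : 0 ≤ c := by simpa using h 0
  have hsq (x : E) : φ x ^ 2 ≤ 4 * a * c * ‖x‖ ^ 2 := by
    have hquad (t : ℝ) : 0 ≤ a * ‖x‖ ^ 2 * (t * t) + -φ x * t + c := by
      have := h (t • x)
      rw [map_smul, smul_eq_mul, norm_smul, mul_pow, Real.norm_eq_abs, sq_abs] at this
      linarith
    have hdiscrim := discrim_le_zero hquad
    rw [discrim] at hdiscrim
    linarith
  have hnorm : ‖φ‖ ≤ √(4 * a * c) := by
    refine φ.opNorm_le_bound (Real.sqrt_nonneg _) fun x ↦ ?_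
    rw [Real.norm_eq_abs]
    refine abs_le_of_sq_le_sq ?_ (by positivity)
    rw [mul_pow, Real.sq_sqrt (by positivity)]
    exact hsq x
  exact (Real.le_sqrt (norm_nonneg φ) (by positivity)).mp hnorm

theorem add_apply_sub_add_sq_norm_sub_le_of_tangent_le {f : E → ℝ} {φ ψ : StrongDual ℝ E}
    {L : ℝ} {u v : E} (hL : 0 < L)
    (hupper : ∀ h, f (u + h) ≤ f u + φ h + L / 2 * ‖h‖ ^ 2)
    (hlower : ∀ y, f v + ψ (y - v) ≤ f y) :
    f v + ψ (u - v) + 1 / (2 * L) * ‖φ - ψ‖ ^ 2 ≤ f u := by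
  have hdiff (h : E) : (ψ - φ) h ≤ f u - f v - ψ (u - v) + L / 2 * ‖h‖ ^ 2 := by
    have htangent := hlower (u + h)
    rw [add_sub_right_comm, map_add] at htangent
    rw [sub_apply]
    linarith [hupper h]
  have hnorm : ‖φ - ψ‖ ^ 2 ≤ 2 * L * (f u - f v - ψ (u - v)) := by
    rw [norm_sub_rev]
    linarith [sq_norm_le_of_forall_apply_le_add_mul_sq (by positivity) hdiff]
  have hgap : 1 / (2 * L) * ‖φ - ψ‖ ^ 2 ≤ f u - f v - ψ (u - v) := by
    rw [one_div_mul_eq_div]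
    exact (div_le_iff₀' (by positivity)).mpr hnorm
  linarith

theorem cocoercivity_of_smooth_convex_general {L : ℝ} (hL : 0 < L) {f : E → ℝ}
    {f' : E → StrongDual ℝ E} (hconv : ConvexOn ℝ univ f) (hderiv : ∀ x, HasFDerivAt f (f' x) x)
    (hsmooth : ∀ x h, f (x + h) ≤ f x + f' x h + L / 2 * ‖h‖ ^ 2) (u v : E) :
    1 / L * ‖f' u - f' v‖ ^ 2 ≤ (f' u - f' v) (u - v) := by
  have htangent (x y : E) : f x + f' x (y - x) ≤ f y :=
    add_apply_sub_le_of_convexOn_of_hasFDerivWithinAt hconv (mem_univ x) (mem_univ y)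
      (hderiv x).hasFDerivWithinAt
  have hv := add_apply_sub_add_sq_norm_sub_le_of_tangent_le hL (hsmooth u) (htangent v)
  have hu := add_apply_sub_add_sq_norm_sub_le_of_tangent_le hL (hsmooth v) (htangent u)
  rw [norm_sub_rev, ← neg_sub u v, map_neg] at hu
  calc
    1 / L * ‖f' u - f' v‖ ^ 2
      = 1 / (2 * L) * ‖f' u - f' v‖ ^ 2 + 1 / (2 * L) * ‖f' u - f' v‖ ^ 2 := by
        ring
    _ ≤ f' u (u - v) - f' v (u - v) := by linarith
    _ = (f' u - f' v) (u - v) := (sub_apply ..).symm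

end NormedSpace

/-- Co-coercivity of gradients of smooth convex functions. -/
theorem cocoercivity_of_smooth_convex
    {H : Type*} [NormedAddCommGroup H] [InnerProductSpace ℝ H] [CompleteSpace H]
    (L : ℝ) (hL : 0 < L)
    (f : H → ℝ) (f' : H → H)
    (hconv : ConvexOn ℝ Set.univ f)
    (hgrad : ∀ g : H, HasGradientAt f (f' g) g)
    (hsmooth : ∀ g h : H, f (g + h) ≤ f g + ⟪f' g, h⟫ + L / 2 * ‖h‖ ^ 2) :
    ∀ u v : H, 1 / L * ‖f' u - f' v‖ ^ 2 ≤ ⟪f' u - f' v, u - v⟫ := by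
  intro u v
  simpa only [← map_sub, LinearIsometryEquiv.norm_map, InnerProductSpace.toDual_apply_apply] using
    cocoercivity_of_smooth_convex_general hL hconv (fun g ↦ (hgrad g).hasFDerivAt) hsmooth u v
end

section
/- (Sublinear recursion lemma.) Let γ ≥ 1, ν ≥ 0, and c be real numbers with 0 ≤ c ≤ ν. Let (a_t)_{t≥1} be a sequence of real numbers such that a₁ ≤ ν/(γ+1) and a_{t+1} ≤ (1 − 2/(γ+t))·a_t + c/(γ+t)² for every t ≥ 1, and assume a_t ≥ 0 for all t. Then a_t ≤ ν/(γ+t) for every t ≥ 1. -/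
open Filter Set

section LinearOrderedField

variable {K : Type*} [Field K] [LinearOrder K] [IsStrictOrderedRing K]

lemma sub_one_div_sq_le_inv_add_one {s : K} (hs : 0 < s) : (s - 1) / s ^ 2 ≤ (s + 1)⁻¹ := by
  rw [← one_div, div_le_div_iff₀ (by positivity) (by positivity)]
  linarith [show (s - 1) * (s + 1) = s ^ 2 - 1 by ring]

-- The noise `c / s ^ 2` may use up all but one unit of the contraction `β`:
-- what is left, `ν / s - ν / s ^ 2`, lies below `ν / (s + 1)` because `s ^ 2 - 1 ≤ s ^ 2`.
lemma one_sub_div_mul_add_div_sq_le_div_add_one {β ν c s x : K} (hν : 0 ≤ ν) (hs : 0 < s)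
    (hβ : β ≤ s) (hc : c ≤ (β - 1) * ν) (hx : x ≤ ν / s) :
    (1 - β / s) * x + c / s ^ 2 ≤ ν / (s + 1) := by
  have contraction_nonneg : 0 ≤ 1 - β / s := sub_nonneg.2 ((div_le_one₀ hs).2 hβ)
  calc
    (1 - β / s) * x + c / s ^ 2
      ≤ (1 - β / s) * (ν / s) + (β - 1) * ν / s ^ 2 := by gcongr
    _ = ν * ((s - 1) / s ^ 2) := by field_simp; ring
    _ ≤ ν * (s + 1)⁻¹ := by gcongr; exact sub_one_div_sq_le_inv_add_one hs
    _ = ν / (s + 1) := (div_eq_mul_inv _ _).symm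

theorem sublinear_recursion_general {β γ ν c : K} {m : ℕ} {a : ℕ → K} (hγ : 0 < γ + m)
    (hβ : β ≤ γ + m) (hν : 0 ≤ ν) (hc : c ≤ (β - 1) * ν) (ham : a m ≤ ν / (γ + m))
    (hrec : ∀ t : ℕ, m ≤ t → a (t + 1) ≤ (1 - β / (γ + t)) * a t + c / (γ + t) ^ 2) :
    ∀ t : ℕ, m ≤ t → a t ≤ ν / (γ + t) := by
  intro t hmt
  induction t, hmt using Nat.le_induction with
  | base => exact ham
  | succ t hmt ih =>
    have hγ_le : γ + m ≤ γ + t := by gcongr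
    rw [Nat.cast_succ, ← add_assoc]
    exact (hrec t hmt).trans <|
      one_sub_div_mul_add_div_sq_le_div_add_one hν (hγ.trans_le hγ_le) (hβ.trans hγ_le) hc ih

end LinearOrderedField

/-- Sublinear recursion lemma: the deterministic induction underlying the rate
`E[L_λ(g_t)] − L_λ(g_λ) ≤ ν/(γ+t)` for SGD with learning rates `η_t = 2/(λ(γ+t))`. -/
theorem sublinear_recursion
    (γ ν c : ℝ) (hγ : 1 ≤ γ) (hν : 0 ≤ ν) (hc0 : 0 ≤ c) (hcν : c ≤ ν)
    (a : ℕ → ℝ)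
    (ha1 : a 1 ≤ ν / (γ + 1))
    (hrec : ∀ t : ℕ, 1 ≤ t →
      a (t + 1) ≤ (1 - 2 / (γ + t)) * a t + c / (γ + t) ^ 2)
    (hnonneg : ∀ t : ℕ, 0 ≤ a t) :
    ∀ t : ℕ, 1 ≤ t → a t ≤ ν / (γ + t) :=
  sublinear_recursion_general (by push_cast; linarith) (by push_cast; linarith) hν (by linarith)
    (by simpa only [Nat.cast_one] using ha1) hrec
end
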